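/- Let F be a real-valued, isomorphism-invariant function on noncommutative graphs of the form ⊕_{d=1}^r Ḡ_d ⊗ Q_d (G_1,…,G_r finite simple graphs) satisfying F(S ⊕ T) = F(S) + F(T), F(S ⊗ T) = F(S)·F(T), F(Q_1) = 1, and F(T) ≤ F(S) whenever T ≤ S, for all noncommutative graphs S, T of this form. Then α := log₂ F(Q_2) satisfies α ≥ 1, F(Q_d) = d^α for every d ≥ 1, and F(⊕_{d=1}^r Ḡ_d ⊗ Q_d) = ∑_{d=1}^r F(Ḡ_d)·d^α for all finite simple graphs G_1, …, G_r. -/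

import Mathlib

open scoped Kronecker
open Matrix

namespace NCG

/-- Existence of a cohomomorphism from `T` to `S` (written `T ≤ S`). -/
def Cohom {A B : Type} [Fintype A] [DecidableEq A] [Fintype B] [DecidableEq B]
    (T : Submodule ℂ (Matrix B B ℂ)) (S : Submodule ℂ (Matrix A A ℂ)) : Prop :=
  ∃ (k : ℕ) (E : Fin k → Matrix A B ℂ),
    (∑ i, (E i)ᴴ * E i) = 1 ∧ ∀ i j : Fin k, ∀ M ∈ S, (E i)ᴴ * M * E j ∈ T

/-- The noncommutative graph `Ḡ` of a classical graph `G`. -/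
noncomputable def graphNC {V : Type} [Fintype V] [DecidableEq V] (G : SimpleGraph V) :
    Submodule ℂ (Matrix V V ℂ) :=
  Submodule.span ℂ {M | ∃ x y : V, (G.Adj x y ∨ x = y) ∧ M = Matrix.single x y 1}

/-- The confusability graph `Q_d = ℂ·I_d` of the noiseless `d`-dimensional quantum channel. -/
noncomputable def qGraph (d : ℕ) : Submodule ℂ (Matrix (Fin d) (Fin d) ℂ) :=
  Submodule.span ℂ {(1 : Matrix (Fin d) (Fin d) ℂ)}

/-- Tensor product of noncommutative graphs. -/
noncomputable def ncTensor {A B : Type} [Fintype A] [DecidableEq A] [Fintype B] [DecidableEq B]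
    (S : Submodule ℂ (Matrix A A ℂ)) (T : Submodule ℂ (Matrix B B ℂ)) :
    Submodule ℂ (Matrix (A × B) (A × B) ℂ) :=
  Submodule.span ℂ {M | ∃ X ∈ S, ∃ Y ∈ T, M = X ⊗ₖ Y}

/-- Direct sum of a finite family of noncommutative graphs. -/
noncomputable def ncDirectSum {ι : Type} [Fintype ι] [DecidableEq ι] {V : ι → Type}
    [∀ i, Fintype (V i)] [∀ i, DecidableEq (V i)]
    (S : ∀ i, Submodule ℂ (Matrix (V i) (V i) ℂ)) :
    Submodule ℂ (Matrix (Σ i, V i) (Σ i, V i) ℂ) where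
  carrier := {M | (∀ p q : Σ i, V i, p.1 ≠ q.1 → M p q = 0) ∧
    ∀ i, (Matrix.of fun x y : V i => M ⟨i, x⟩ ⟨i, y⟩) ∈ S i}
  add_mem' := by
    rintro a b ⟨ha1, ha2⟩ ⟨hb1, hb2⟩
    refine ⟨fun p q h => ?_, fun i => ?_⟩
    · simp [Matrix.add_apply, ha1 p q h, hb1 p q h]
    · have h := (S i).add_mem (ha2 i) (hb2 i)
      exact h
  zero_mem' := by
    refine ⟨fun p q h => rfl, fun i => ?_⟩
    have h0 : (Matrix.of fun x y : V i =>
        (0 : Matrix (Σ j, V j) (Σ j, V j) ℂ) ⟨i, x⟩ ⟨i, y⟩) = 0 := rfl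
    rw [h0]
    exact (S i).zero_mem
  smul_mem' := by
    rintro c a ⟨ha1, ha2⟩
    refine ⟨fun p q h => ?_, fun i => ?_⟩
    · simp [Matrix.smul_apply, ha1 p q h]
    · have h := (S i).smul_mem c (ha2 i)
      exact h

/-- `⊕_{d=1}^r Ḡ_d ⊗ Q_d`, where `G d` plays the role of `G_{d+1}` for `d : Fin r`. -/
noncomputable def bigSum {r : ℕ} {V : Fin r → Type} [∀ d, Fintype (V d)] [∀ d, DecidableEq (V d)]
    (G : ∀ d, SimpleGraph (V d)) :
    Submodule ℂ (Matrix (Σ d : Fin r, V d × Fin (d.1 + 1))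
      (Σ d : Fin r, V d × Fin (d.1 + 1)) ℂ) :=
  ncDirectSum fun d : Fin r => ncTensor (graphNC (G d)) (qGraph (d.1 + 1))

/-- Isomorphism of noncommutative graphs: a unitary intertwining the two operator systems. -/
def NCIso {A B : Type} [Fintype A] [DecidableEq A] [Fintype B] [DecidableEq B]
    (S : Submodule ℂ (Matrix A A ℂ)) (T : Submodule ℂ (Matrix B B ℂ)) : Prop :=
  ∃ U : Matrix B A ℂ, Uᴴ * U = 1 ∧ U * Uᴴ = 1 ∧ ∀ M, M ∈ S ↔ U * M * Uᴴ ∈ T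


/-- Binary direct sum of noncommutative graphs. -/
noncomputable def ncDirectSum₂ {A B : Type} [Fintype A] [DecidableEq A]
    [Fintype B] [DecidableEq B]
    (S : Submodule ℂ (Matrix A A ℂ)) (T : Submodule ℂ (Matrix B B ℂ)) :
    Submodule ℂ (Matrix (A ⊕ B) (A ⊕ B) ℂ) where
  carrier := {M | (Matrix.of fun x y : A => M (Sum.inl x) (Sum.inl y)) ∈ S ∧
    (Matrix.of fun x y : B => M (Sum.inr x) (Sum.inr y)) ∈ T ∧
    (∀ x y, M (Sum.inl x) (Sum.inr y) = 0) ∧ ∀ x y, M (Sum.inr x) (Sum.inl y) = 0}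
  add_mem' := by
    rintro a b ⟨ha1, ha2, ha3, ha4⟩ ⟨hb1, hb2, hb3, hb4⟩
    refine ⟨?_, ?_, fun x y => ?_, fun x y => ?_⟩
    · have h := S.add_mem ha1 hb1; exact h
    · have h := T.add_mem ha2 hb2; exact h
    · simp [Matrix.add_apply, ha3 x y, hb3 x y]
    · simp [Matrix.add_apply, ha4 x y, hb4 x y]
  zero_mem' := by
    refine ⟨?_, ?_, fun x y => rfl, fun x y => rfl⟩
    · exact S.zero_mem
    · exact T.zero_mem
  smul_mem' := by
    rintro c a ⟨ha1, ha2, ha3, ha4⟩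
    refine ⟨?_, ?_, fun x y => ?_, fun x y => ?_⟩
    · have h := S.smul_mem c ha1; exact h
    · have h := T.smul_mem c ha2; exact h
    · simp [Matrix.smul_apply, ha3 x y]
    · simp [Matrix.smul_apply, ha4 x y]

/-- A noncommutative graph is (up to isomorphism) of the form `⊕_{d=1}^r Ḡ_d ⊗ Q_d`. -/
def InClass {A : Type} [Fintype A] [DecidableEq A] (S : Submodule ℂ (Matrix A A ℂ)) : Prop :=
  ∃ (r : ℕ) (m : Fin r → ℕ) (G : ∀ d, SimpleGraph (Fin (m d))), NCIso S (bigSum G)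

/-!
Two structural facts carry the proof: relabelling the basis is an isomorphism, and a block
`Ḡ_d ⊗ Q_d` is a sum of the required form all of whose other summands live on empty vertex sets.
Hence every piece of `⊕ Ḡ_d ⊗ Q_d` lies in the class, and additivity and multiplicativity reduce
`F` to its values on the `Ḡ_d` and on the `Q_d`.

Since `Q_d ⊗ Q_e ≅ Q_{de}` and `Q_d ≤ Q_e` for `d ≤ e`, the function `d ↦ F Q_d` is multiplicative
and monotone; comparing the powers of two integers then forces it to be a power of `d`. The
exponent is at least one because `F Q_2` dominates the value at the edgeless graph on two vertices,
which is `Q_1 ⊕ Q_1`.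
-/

section Isomorphism

lemma conjTranspose_mul_conj_mul {m n α : Type*} [Fintype m] [Fintype n] [DecidableEq n]
    [Semiring α] [Star α] {U : Matrix m n α} (hU : Uᴴ * U = 1) (M : Matrix n n α) :
    Uᴴ * (U * M * Uᴴ) * U = M := by
  rw [Matrix.mul_assoc U, ← Matrix.mul_assoc, hU, Matrix.one_mul, Matrix.mul_assoc, hU,
    Matrix.mul_one]

variable {A B C : Type} [Fintype A] [DecidableEq A] [Fintype B] [DecidableEq B] [Fintype C]
  [DecidableEq C] {S : Submodule ℂ (Matrix A A ℂ)} {T : Submodule ℂ (Matrix B B ℂ)}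
  {R : Submodule ℂ (Matrix C C ℂ)}

lemma ncIso_iff_exists_conj_mem : NCIso S T ↔ ∃ U : Matrix B A ℂ, Uᴴ * U = 1 ∧ U * Uᴴ = 1 ∧
    (∀ M ∈ S, U * M * Uᴴ ∈ T) ∧ ∀ N ∈ T, Uᴴ * N * U ∈ S := by
  refine exists_congr fun U => and_congr_right fun hU => and_congr_right fun hU' => ?_
  refine ⟨fun h => ⟨fun M => (h M).1, fun N hN => (h _).2 ?_⟩,
    fun h M => ⟨h.1 M, fun hM => conjTranspose_mul_conj_mul hU M ▸ h.2 _ hM⟩⟩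
  have hUN := conjTranspose_mul_conj_mul (U := Uᴴ) (by simpa using hU') N
  rw [conjTranspose_conjTranspose] at hUN
  rwa [hUN]

lemma NCIso.refl (S : Submodule ℂ (Matrix A A ℂ)) : NCIso S S :=
  ⟨1, by simp, by simp, by simp⟩

lemma NCIso.symm (h : NCIso S T) : NCIso T S := by
  obtain ⟨U, hU, hU', hST, hTS⟩ := ncIso_iff_exists_conj_mem.1 h
  exact ncIso_iff_exists_conj_mem.2
    ⟨Uᴴ, by simpa using hU', by simpa using hU, by simpa using hTS, by simpa using hST⟩

lemma NCIso.trans (hST : NCIso S T) (hTR : NCIso T R) : NCIso S R := by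
  obtain ⟨U, hU, hU', hM⟩ := hST
  obtain ⟨W, hW, hW', hN⟩ := hTR
  refine ⟨W * U, ?_, ?_, fun M => ?_⟩
  · rw [conjTranspose_mul, Matrix.mul_assoc, ← Matrix.mul_assoc Wᴴ, hW, Matrix.one_mul, hU]
  · rw [conjTranspose_mul, Matrix.mul_assoc, ← Matrix.mul_assoc U, hU', Matrix.one_mul, hW']
  · rw [hM, hN, conjTranspose_mul]
    simp only [Matrix.mul_assoc]

lemma NCIso.of_equiv (e : A ≃ B) (h : ∀ N, N ∈ T ↔ N.submatrix e e ∈ S) : NCIso S T := by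
  refine ⟨(1 : Matrix B B ℂ).submatrix id e, ?_, ?_, fun M => ?_⟩
  · simp [conjTranspose_submatrix, ← submatrix_mul _ _ _ id _ Function.bijective_id]
  · simp [conjTranspose_submatrix, mul_submatrix_one]
  · rw [h]
    simp [conjTranspose_submatrix, mul_submatrix_one, one_submatrix_mul]

lemma NCIso.of_isEmpty [IsEmpty A] [IsEmpty B] : NCIso S T :=
  .of_equiv (Equiv.equivOfIsEmpty A B) fun N => by
    simp [Subsingleton.elim N 0]

end Isomorphism

section Graph

variable {V W : Type} [Fintype V] [DecidableEq V] [Fintype W] [DecidableEq W]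

lemma mem_graphNC {G : SimpleGraph V} {M : Matrix V V ℂ} :
    M ∈ graphNC G ↔ ∀ x y, ¬ (G.Adj x y ∨ x = y) → M x y = 0 := by
  constructor
  · intro hM x y hxy
    induction hM using Submodule.span_induction with
    | mem N hN =>
      obtain ⟨a, b, hab, rfl⟩ := hN
      rw [Matrix.single_apply_of_ne]
      rintro ⟨rfl, rfl⟩
      exact hxy hab
    | zero => rfl
    | add N N' _ _ h h' => simp [h, h']
    | smul c N _ h => simp [h]
  · intro h
    rw [Matrix.matrix_eq_sum_single M]
    refine Submodule.sum_mem _ fun x _ => Submodule.sum_mem _ fun y _ => ?_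
    by_cases hxy : G.Adj x y ∨ x = y
    · rw [← mul_one (M x y), ← smul_eq_mul, ← Matrix.smul_single]
      exact Submodule.smul_mem _ _ (Submodule.subset_span ⟨x, y, hxy, rfl⟩)
    · simp [h x y hxy]

lemma NCIso.graphNC {G : SimpleGraph V} {H : SimpleGraph W} (e : G ≃g H) :
    NCIso (graphNC G) (graphNC H) :=
  .of_equiv e.toEquiv fun N => by
    simp only [mem_graphNC, e.surjective.forall, e.map_adj_iff, e.injective.eq_iff]
    rfl

lemma ncDirectSum₂_graphNC (G : SimpleGraph V) (H : SimpleGraph W) :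
    ncDirectSum₂ (graphNC G) (graphNC H) = graphNC (G ⊕g H) := by
  ext M
  refine Iff.trans (and_congr mem_graphNC (and_congr_left' mem_graphNC)) ?_
  simp only [mem_graphNC, Sum.forall, of_apply, SimpleGraph.sum_adj, Sum.inl.injEq, Sum.inr.injEq,
    reduceCtorEq, or_self, not_false_eq_true, forall_const, forall_and]
  tauto

lemma graphNC_eq_qGraph_one (G : SimpleGraph (Fin 1)) : graphNC G = qGraph 1 := by
  ext M
  rw [mem_graphNC, qGraph, Submodule.mem_span_singleton]
  refine ⟨fun _ => ⟨M 0 0, ?_⟩, fun _ x y h => absurd (.inr (Subsingleton.elim x y)) h⟩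
  ext i j
  simp [Subsingleton.elim i 0, Subsingleton.elim j 0]

lemma qGraph_le_graphNC {d : ℕ} (G : SimpleGraph (Fin d)) : qGraph d ≤ graphNC G := by
  refine (Submodule.span_singleton_le_iff_mem ..).2 (mem_graphNC.2 fun x y h => ?_)
  exact one_apply_ne (not_or.1 h).2

end Graph

section Tensor

variable {A A' B B' : Type} [Fintype A] [DecidableEq A] [Fintype A'] [DecidableEq A']
  [Fintype B] [DecidableEq B] [Fintype B'] [DecidableEq B']
  {S : Submodule ℂ (Matrix A A ℂ)} {S' : Submodule ℂ (Matrix A' A' ℂ)}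
  {T : Submodule ℂ (Matrix B B ℂ)} {T' : Submodule ℂ (Matrix B' B' ℂ)}

lemma ncTensor_eq_map₂ (S : Submodule ℂ (Matrix A A ℂ)) (T : Submodule ℂ (Matrix B B ℂ)) :
    ncTensor S T = Submodule.map₂ (kroneckerBilinear (R := ℂ) (α := ℂ)) S T := by
  rw [Submodule.map₂_eq_span_image2, ncTensor]
  congr 1
  ext M
  simp only [Set.mem_image2, SetLike.mem_coe, Set.mem_ofPred_eq, eq_comm]
  rfl

lemma kronecker_conj_mem_ncTensor {U : Matrix A' A ℂ} {W : Matrix B' B ℂ}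
    (hU : ∀ X ∈ S, U * X * Uᴴ ∈ S') (hW : ∀ Y ∈ T, W * Y * Wᴴ ∈ T')
    {M : Matrix (A × B) (A × B) ℂ} (hM : M ∈ ncTensor S T) :
    (U ⊗ₖ W) * M * (U ⊗ₖ W)ᴴ ∈ ncTensor S' T' := by
  induction hM using Submodule.span_induction with
  | mem M hM =>
    obtain ⟨X, hX, Y, hY, rfl⟩ := hM
    rw [conjTranspose_kronecker, ← mul_kronecker_mul, ← mul_kronecker_mul]
    exact Submodule.subset_span ⟨_, hU X hX, _, hW Y hY, rfl⟩
  | zero => simp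
  | add M N _ _ hM hN =>
    rw [Matrix.mul_add, Matrix.add_mul]
    exact add_mem hM hN
  | smul c M _ hM =>
    rw [Matrix.mul_smul, Matrix.smul_mul]
    exact Submodule.smul_mem _ c hM

lemma NCIso.ncTensor (hS : NCIso S S') (hT : NCIso T T') :
    NCIso (ncTensor S T) (ncTensor S' T') := by
  rw [ncIso_iff_exists_conj_mem] at hS hT ⊢
  obtain ⟨U, hU, hU', hSS', hS'S⟩ := hS
  obtain ⟨W, hW, hW', hTT', hT'T⟩ := hT
  refine ⟨U ⊗ₖ W, ?_, ?_, fun M => kronecker_conj_mem_ncTensor hSS' hTT', fun N hN => ?_⟩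
  · rw [conjTranspose_kronecker, ← mul_kronecker_mul, hU, hW, one_kronecker_one]
  · rw [conjTranspose_kronecker, ← mul_kronecker_mul, hU', hW', one_kronecker_one]
  · simpa [conjTranspose_kronecker] using kronecker_conj_mem_ncTensor (U := Uᴴ) (W := Wᴴ)
      (by simpa using hS'S) (by simpa using hT'T) hN

lemma mem_ncTensor_qGraph {d : ℕ} {M : Matrix (A × Fin d) (A × Fin d) ℂ} :
    M ∈ ncTensor S (qGraph d) ↔ ∃ X ∈ S, X ⊗ₖ (1 : Matrix (Fin d) (Fin d) ℂ) = M := by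
  rw [ncTensor_eq_map₂, qGraph, Submodule.map₂_span_singleton_eq_map_flip, Submodule.mem_map]
  rfl

lemma ncIso_ncTensor_qGraph_one (S : Submodule ℂ (Matrix A A ℂ)) :
    NCIso (ncTensor S (qGraph 1)) S := by
  refine .of_equiv (Equiv.prodUnique A (Fin 1)) fun N => ?_
  rw [mem_ncTensor_qGraph]
  have hN : N.submatrix (Equiv.prodUnique A (Fin 1)) (Equiv.prodUnique A (Fin 1)) =
      N ⊗ₖ (1 : Matrix (Fin 1) (Fin 1) ℂ) := by
    ext ⟨x, i⟩ ⟨y, j⟩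
    simp [Subsingleton.elim i j]
  rw [hN]
  refine ⟨fun h => ⟨N, h, rfl⟩, ?_⟩
  rintro ⟨X, hX, h⟩
  convert hX
  ext x y
  simpa using (congrFun₂ h (x, 0) (y, 0)).symm

lemma ncIso_ncTensor_qGraph_qGraph (d e : ℕ) :
    NCIso (ncTensor (qGraph d) (qGraph e)) (qGraph (d * e)) := by
  refine .of_equiv finProdFinEquiv fun N => ?_
  simp only [mem_ncTensor_qGraph]
  simp only [qGraph, Submodule.mem_span_singleton, exists_exists_eq_and,
    smul_kronecker, one_kronecker_one]
  refine exists_congr fun c => ?_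
  rw [← (reindex finProdFinEquiv.symm finProdFinEquiv.symm).injective.eq_iff]
  simp [submatrix_smul]

end Tensor

section DirectSum

variable {ι : Type} [Fintype ι] [DecidableEq ι] {V W : ι → Type} [∀ i, Fintype (V i)]
  [∀ i, DecidableEq (V i)] [∀ i, Fintype (W i)] [∀ i, DecidableEq (W i)]
  {S : ∀ i, Submodule ℂ (Matrix (V i) (V i) ℂ)} {T : ∀ i, Submodule ℂ (Matrix (W i) (W i) ℂ)}

lemma mem_ncDirectSum_iff_exists_blockDiagonal' {M : Matrix (Σ i, V i) (Σ i, V i) ℂ} :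
    M ∈ ncDirectSum S ↔ ∃ X : ∀ i, Matrix (V i) (V i) ℂ,
      (∀ i, X i ∈ S i) ∧ blockDiagonal' X = M := by
  constructor
  · rintro ⟨hoff, hdiag⟩
    refine ⟨blockDiag' M, hdiag, ?_⟩
    ext ⟨i, x⟩ ⟨j, y⟩
    obtain rfl | hij := eq_or_ne i j
    · simp [blockDiag'_apply]
    · rw [blockDiagonal'_apply_ne _ _ _ hij, hoff _ _ hij]
  · rintro ⟨X, hX, rfl⟩
    refine ⟨fun p q h => blockDiagonal'_apply_ne _ _ _ h, fun i => ?_⟩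
    convert hX i
    ext x y
    simp

lemma NCIso.ncDirectSum (h : ∀ i, NCIso (S i) (T i)) :
    NCIso (ncDirectSum S) (ncDirectSum T) := by
  simp only [ncIso_iff_exists_conj_mem] at h ⊢
  choose U hU hU' hST hTS using h
  simp only [mem_ncDirectSum_iff_exists_blockDiagonal']
  refine ⟨blockDiagonal' U, ?_, ?_, ?_, ?_⟩
  · simp_rw [blockDiagonal'_conjTranspose, ← blockDiagonal'_mul, hU]
    exact blockDiagonal'_one
  · simp_rw [blockDiagonal'_conjTranspose, ← blockDiagonal'_mul, hU']
    exact blockDiagonal'_one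
  · rintro _ ⟨X, hX, rfl⟩
    exact ⟨_, fun i => hST i _ (hX i), by simp [blockDiagonal'_conjTranspose, blockDiagonal'_mul]⟩
  · rintro _ ⟨Y, hY, rfl⟩
    exact ⟨_, fun i => hTS i _ (hY i), by simp [blockDiagonal'_conjTranspose, blockDiagonal'_mul]⟩

lemma ncIso_ncDirectSum_of_isEmpty (S : ∀ i, Submodule ℂ (Matrix (V i) (V i) ℂ)) (i : ι)
    (hV : ∀ j, j ≠ i → IsEmpty (V j)) : NCIso (S i) (ncDirectSum S) := by
  have hi : ∀ p : Σ j, V j, p.1 = i := fun p => by_contra fun hp => (hV _ hp).false p.2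
  refine .of_equiv (.ofBijective (Sigma.mk i) ⟨sigma_mk_injective, ?_⟩) fun N => ?_
  · rintro ⟨j, x⟩
    obtain rfl := hi ⟨j, x⟩
    exact ⟨x, rfl⟩
  · refine ⟨fun h => h.2 i, fun h => ⟨fun p q hpq => absurd ((hi p).trans (hi q).symm) hpq, ?_⟩⟩
    intro j
    obtain rfl | hj := eq_or_ne j i
    · exact h
    · have := hV j hj
      rw [Subsingleton.elim (Matrix.of _) 0]
      exact zero_mem _

/-- The index set of a direct sum of `r + 1` summands, with the last one split off. -/
def sigmaCastSuccSumLast {r : ℕ} (V : Fin (r + 1) → Type*) :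
    (Σ i : Fin r, V i.castSucc) ⊕ V (Fin.last r) ≃ Σ i, V i where
  toFun := Sum.elim (fun p => ⟨p.1.castSucc, p.2⟩) (Sigma.mk (Fin.last r))
  invFun p := Fin.lastCases (motive := fun i => V i → (Σ i : Fin r, V i.castSucc) ⊕ V (Fin.last r))
    .inr (fun i x => .inl ⟨i, x⟩) p.1 p.2
  left_inv := by rintro (⟨i, x⟩ | x) <;> simp
  right_inv := by
    rintro ⟨i, x⟩
    induction i using Fin.lastCases <;> simp

lemma ncIso_ncDirectSum₂_castSucc_last {r : ℕ} {V : Fin (r + 1) → Type}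
    [∀ i, Fintype (V i)] [∀ i, DecidableEq (V i)]
    (S : ∀ i, Submodule ℂ (Matrix (V i) (V i) ℂ)) :
    NCIso (ncDirectSum₂ (ncDirectSum fun i : Fin r => S i.castSucc) (S (Fin.last r)))
      (ncDirectSum S) := by
  let e := sigmaCastSuccSumLast V
  refine .of_equiv e fun N => ⟨?_, ?_⟩
  · rintro ⟨hoff, hdiag⟩
    exact ⟨⟨fun p q hpq => hoff _ _ ((Fin.castSucc_injective r).ne hpq),
      fun i => hdiag i.castSucc⟩, hdiag (Fin.last r),
      fun p x => hoff _ _ (Fin.castSucc_ne_last _),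
      fun x p => hoff _ _ (Fin.castSucc_ne_last _).symm⟩
  · rintro ⟨⟨hoff, hdiag⟩, hlast, hinl, hinr⟩
    refine ⟨?_, Fin.forall_fin_succ'.2 ⟨hdiag, hlast⟩⟩
    rw [e.surjective.forall₂]
    rintro (p | x) (q | y) hpq
    · exact hoff p q fun h => hpq (congrArg Fin.castSucc h)
    · exact hinl p y
    · exact hinr x q
    · exact absurd rfl hpq

end DirectSum

section Cohom

variable {A : Type} [Fintype A] [DecidableEq A]

lemma Cohom.of_le {S T : Submodule ℂ (Matrix A A ℂ)} (h : S ≤ T) : Cohom T S :=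
  ⟨1, fun _ => 1, by simp, fun _ _ M hM => by simpa using h hM⟩

lemma cohom_qGraph_of_le {d e : ℕ} (h : d ≤ e) : Cohom (qGraph d) (qGraph e) := by
  let E : Matrix (Fin e) (Fin d) ℂ := (1 : Matrix (Fin e) (Fin e) ℂ).submatrix id (Fin.castLE h)
  have hE : Eᴴ * E = 1 := by
    simp [E, conjTranspose_submatrix, ← submatrix_mul _ _ _ id _ Function.bijective_id,
      submatrix_one _ (Fin.castLE_injective h)]
  refine ⟨1, fun _ => E, by simpa using hE, fun _ _ M hM => ?_⟩
  obtain ⟨c, rfl⟩ := Submodule.mem_span_singleton.1 hM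
  exact Submodule.mem_span_singleton.2 ⟨c, by simp [hE]⟩

end Cohom

section InClass

variable {A B V : Type} [Fintype A] [DecidableEq A] [Fintype B] [DecidableEq B] [Fintype V]
  [DecidableEq V]

lemma InClass.of_iso {S : Submodule ℂ (Matrix A A ℂ)} {T : Submodule ℂ (Matrix B B ℂ)}
    (h : NCIso S T) (hT : InClass T) : InClass S := by
  obtain ⟨r, m, G, hG⟩ := hT
  exact ⟨r, m, G, h.trans hG⟩

lemma inClass_of_isEmpty [IsEmpty A] (S : Submodule ℂ (Matrix A A ℂ)) : InClass S :=
  ⟨0, fun _ => 0, fun _ => ⊥, .of_isEmpty⟩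

lemma inClass_bigSum {r : ℕ} {V : Fin r → Type} [∀ d, Fintype (V d)] [∀ d, DecidableEq (V d)]
    (G : ∀ d, SimpleGraph (V d)) : InClass (bigSum G) :=
  ⟨r, fun d => Fintype.card (V d), fun d => (G d).overFin rfl,
    .ncDirectSum fun d => .ncTensor (.graphNC ((G d).overFinIso rfl)) (.refl _)⟩

lemma inClass_ncTensor_graphNC_qGraph (G : SimpleGraph V) (d : ℕ) :
    InClass (ncTensor (graphNC G) (qGraph d)) := by
  obtain _ | d := d
  · exact inClass_of_isEmpty _
  let support : Fin (d + 1) → Set V := fun k => {_v | k = Fin.last d}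
  have support_empty : ∀ k, k ≠ Fin.last d → IsEmpty (support k × Fin (k.1 + 1)) :=
    fun k hk => ⟨fun p => hk p.1.2⟩
  let block : G ≃g G.induce (support (Fin.last d)) :=
    (SimpleGraph.Iso.comap (Equiv.subtypeUnivEquiv fun _ => rfl) G).symm
  have split : NCIso _ (bigSum fun k => G.induce (support k)) :=
    ncIso_ncDirectSum_of_isEmpty _ (Fin.last d) support_empty
  exact .of_iso ((NCIso.ncTensor (.graphNC block) (.refl _)).trans split) (inClass_bigSum _)

lemma inClass_graphNC (G : SimpleGraph V) : InClass (graphNC G) :=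
  .of_iso (ncIso_ncTensor_qGraph_one _).symm (inClass_ncTensor_graphNC_qGraph G 1)

lemma inClass_qGraph (d : ℕ) : InClass (qGraph d) := by
  have h : NCIso (ncTensor (graphNC ⊥) (qGraph d)) (qGraph (1 * d)) :=
    graphNC_eq_qGraph_one ⊥ ▸ ncIso_ncTensor_qGraph_qGraph 1 d
  rw [one_mul] at h
  exact .of_iso h.symm (inClass_ncTensor_graphNC_qGraph ⊥ d)

end InClass

section MonotoneMultiplicative

variable {f : ℕ →* ℝ} {a b d : ℕ}

lemma one_le_map_of_monotone (hf : Monotone f) (hd : d ≠ 0) : 1 ≤ f d :=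
  map_one f ▸ hf (Nat.one_le_iff_ne_zero.2 hd)

lemma log_mul_log_le_of_monotone (hf : Monotone f) (ha : a ≠ 0) (hb : 1 < b) :
    Real.log (f a) * Real.log b ≤ Real.log (f b) * Real.log a := by
  have log_fb_nonneg : 0 ≤ Real.log (f b) :=
    Real.log_nonneg (one_le_map_of_monotone hf (Nat.ne_zero_of_lt hb))
  have log_b_nonneg : 0 ≤ Real.log b := Real.log_natCast_nonneg b
  by_contra! hlt
  obtain ⟨n, hn⟩ := exists_lt_nsmul (sub_pos.2 hlt) (Real.log (f b) * Real.log b)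
  rw [nsmul_eq_mul] at hn
  -- With `b ^ k ≤ a ^ n < b ^ (k + 1)`, compare `f (a ^ n)` with `f (b ^ (k + 1))`.
  let k := Nat.log b (a ^ n)
  have lower : k * Real.log b ≤ n * Real.log a := by
    rw [← Real.log_pow, ← Real.log_pow]
    exact Real.log_le_log (by positivity)
      (by exact_mod_cast Nat.pow_log_le_self b (pow_ne_zero n ha))
  have upper : n * Real.log (f a) ≤ (k + 1 : ℕ) * Real.log (f b) := by
    rw [← Real.log_pow, ← Real.log_pow, ← map_pow, ← map_pow]
    exact Real.log_le_log (one_pos.trans_le (one_le_map_of_monotone hf (pow_ne_zero n ha)))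
      (hf (Nat.lt_pow_succ_log_self hb (a ^ n)).le)
  push_cast at upper
  nlinarith [mul_le_mul_of_nonneg_right upper log_b_nonneg,
    mul_le_mul_of_nonneg_left lower log_fb_nonneg]

lemma eq_rpow_logb_of_monotone (hf : Monotone f) (hb : 1 < b) (hd : d ≠ 0) :
    f d = (d : ℝ) ^ Real.logb b (f b) := by
  obtain rfl | hd₁ : d = 1 ∨ 1 < d := by lia
  · simp
  have cross : Real.log (f d) * Real.log b = Real.log (f b) * Real.log d :=
    (log_mul_log_le_of_monotone hf hd hb).antisymm
      (log_mul_log_le_of_monotone hf (Nat.ne_zero_of_lt hb) hd₁)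
  have log_b_ne_zero : Real.log b ≠ 0 := (Real.log_pos (by exact_mod_cast hb)).ne'
  rw [Real.rpow_def_of_pos (by positivity), Real.logb, mul_div_left_comm, mul_div_assoc', ← cross,
    mul_div_cancel_right₀ _ log_b_ne_zero,
    Real.exp_log (one_pos.trans_le (one_le_map_of_monotone hf hd))]

end MonotoneMultiplicative

/-- Points of the asymptotic spectrum of the noncommutative graphs `⊕_d Ḡ_d ⊗ Q_d`: the
isomorphism-invariant functions that are additive, multiplicative, normalized at `Q_1` and monotone
under cohomomorphism on that class. Values outside the class are unconstrained. -/
structure IsSpectralPoint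
    (F : ∀ (A : Type) [Fintype A] [DecidableEq A], Submodule ℂ (Matrix A A ℂ) → ℝ) : Prop where
  map_eq_of_iso {A B : Type} [Fintype A] [DecidableEq A] [Fintype B] [DecidableEq B]
    {S : Submodule ℂ (Matrix A A ℂ)} {T : Submodule ℂ (Matrix B B ℂ)} :
    InClass S → InClass T → NCIso S T → F A S = F B T
  map_ncDirectSum₂ {A B : Type} [Fintype A] [DecidableEq A] [Fintype B] [DecidableEq B]
    {S : Submodule ℂ (Matrix A A ℂ)} {T : Submodule ℂ (Matrix B B ℂ)} :
    InClass S → InClass T → F (A ⊕ B) (ncDirectSum₂ S T) = F A S + F B T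
  map_ncTensor {A B : Type} [Fintype A] [DecidableEq A] [Fintype B] [DecidableEq B]
    {S : Submodule ℂ (Matrix A A ℂ)} {T : Submodule ℂ (Matrix B B ℂ)} :
    InClass S → InClass T → F (A × B) (ncTensor S T) = F A S * F B T
  map_qGraph_one : F (Fin 1) (qGraph 1) = 1
  mono {A B : Type} [Fintype A] [DecidableEq A] [Fintype B] [DecidableEq B]
    {S : Submodule ℂ (Matrix A A ℂ)} {T : Submodule ℂ (Matrix B B ℂ)} :
    InClass S → InClass T → Cohom T S → F B T ≤ F A S

namespace IsSpectralPoint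

variable {F : ∀ (A : Type) [Fintype A] [DecidableEq A], Submodule ℂ (Matrix A A ℂ) → ℝ}
  {A B V : Type} [Fintype A] [DecidableEq A] [Fintype B] [DecidableEq B] [Fintype V]
  [DecidableEq V] {S : Submodule ℂ (Matrix A A ℂ)} {T : Submodule ℂ (Matrix B B ℂ)}

lemma map_congr (hF : IsSpectralPoint F) (h : NCIso S T) (hT : InClass T) : F A S = F B T :=
  hF.map_eq_of_iso (.of_iso h hT) hT h

lemma map_eq_zero_of_isEmpty (hF : IsSpectralPoint F) [IsEmpty A] : F A S = 0 := by
  have hadd := hF.map_ncDirectSum₂ (inClass_of_isEmpty S) (inClass_of_isEmpty S)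
  rw [hF.map_congr (T := S) .of_isEmpty (inClass_of_isEmpty S)] at hadd
  linarith

lemma map_graphNC_le (hF : IsSpectralPoint F) (G : SimpleGraph V) :
    F V (graphNC G) ≤ F (Fin (Fintype.card V)) (qGraph (Fintype.card V)) := by
  rw [hF.map_congr (.graphNC (G.overFinIso rfl)) (inClass_graphNC _)]
  exact hF.mono (inClass_qGraph _) (inClass_graphNC _) (.of_le (qGraph_le_graphNC _))

lemma two_le_map_qGraph_two (hF : IsSpectralPoint F) : 2 ≤ F (Fin 2) (qGraph 2) :=
  have h₁ := inClass_graphNC (⊥ : SimpleGraph (Fin 1))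
  calc (2 : ℝ) = F (Fin 1) (graphNC ⊥) + F (Fin 1) (graphNC ⊥) := by
        rw [graphNC_eq_qGraph_one, hF.map_qGraph_one, one_add_one_eq_two]
    _ = F (Fin 1 ⊕ Fin 1) (graphNC (⊥ ⊕g ⊥)) := by
        rw [← hF.map_ncDirectSum₂ h₁ h₁, ncDirectSum₂_graphNC]
    _ ≤ F (Fin 2) (qGraph 2) := hF.map_graphNC_le _

lemma one_le_logb_map_qGraph_two (hF : IsSpectralPoint F) :
    1 ≤ Real.logb 2 (F (Fin 2) (qGraph 2)) := by
  have h := hF.two_le_map_qGraph_two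
  rwa [Real.le_logb_iff_rpow_le one_lt_two (by linarith), Real.rpow_one]

/-- The multiplicative function `d ↦ F Q_d` on the natural numbers. -/
noncomputable def qGraphHom (hF : IsSpectralPoint F) : ℕ →* ℝ where
  toFun d := F (Fin d) (qGraph d)
  map_one' := hF.map_qGraph_one
  map_mul' d e := by
    rw [← hF.map_ncTensor (inClass_qGraph d) (inClass_qGraph e)]
    exact (hF.map_congr (ncIso_ncTensor_qGraph_qGraph d e) (inClass_qGraph _)).symm

lemma monotone_qGraphHom (hF : IsSpectralPoint F) : Monotone hF.qGraphHom := fun d e hde =>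
  hF.mono (inClass_qGraph e) (inClass_qGraph d) (cohom_qGraph_of_le hde)

lemma map_qGraph (hF : IsSpectralPoint F) {d : ℕ} (hd : d ≠ 0) :
    F (Fin d) (qGraph d) = (d : ℝ) ^ Real.logb 2 (F (Fin 2) (qGraph 2)) := by
  exact_mod_cast eq_rpow_logb_of_monotone hF.monotone_qGraphHom one_lt_two hd

lemma map_bigSum (hF : IsSpectralPoint F) {r : ℕ} {V : Fin r → Type} [∀ d, Fintype (V d)]
    [∀ d, DecidableEq (V d)] (G : ∀ d, SimpleGraph (V d)) :
    F _ (bigSum G) = ∑ d, F (V d) (graphNC (G d)) * F (Fin (d.1 + 1)) (qGraph (d.1 + 1)) := by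
  induction r with
  | zero => simpa using hF.map_eq_zero_of_isEmpty
  | succ r ih =>
    have split := ncIso_ncDirectSum₂_castSucc_last
      fun d => ncTensor (graphNC (G d)) (qGraph (d.1 + 1))
    rw [bigSum, ← hF.map_congr split (inClass_bigSum G), Fin.sum_univ_castSucc,
      ← hF.map_ncTensor (inClass_graphNC _) (inClass_qGraph _)]
    refine (hF.map_ncDirectSum₂ (inClass_bigSum fun d => G d.castSucc)
      (inClass_ncTensor_graphNC_qGraph _ _)).trans ?_
    rw [ih fun d => G d.castSucc]
    rfl

end IsSpectralPoint

theorem extension_structure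
    (F : ∀ (A : Type) [Fintype A] [DecidableEq A], Submodule ℂ (Matrix A A ℂ) → ℝ)
    (hiso : ∀ (A B : Type) [Fintype A] [DecidableEq A] [Fintype B] [DecidableEq B]
      (S : Submodule ℂ (Matrix A A ℂ)) (T : Submodule ℂ (Matrix B B ℂ)),
      InClass S → InClass T → NCIso S T → F A S = F B T)
    (hadd : ∀ (A B : Type) [Fintype A] [DecidableEq A] [Fintype B] [DecidableEq B]
      (S : Submodule ℂ (Matrix A A ℂ)) (T : Submodule ℂ (Matrix B B ℂ)),
      InClass S → InClass T → F (A ⊕ B) (ncDirectSum₂ S T) = F A S + F B T)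
    (hmul : ∀ (A B : Type) [Fintype A] [DecidableEq A] [Fintype B] [DecidableEq B]
      (S : Submodule ℂ (Matrix A A ℂ)) (T : Submodule ℂ (Matrix B B ℂ)),
      InClass S → InClass T → F (A × B) (ncTensor S T) = F A S * F B T)
    (hnorm : F (Fin 1) (qGraph 1) = 1)
    (hmono : ∀ (A B : Type) [Fintype A] [DecidableEq A] [Fintype B] [DecidableEq B]
      (S : Submodule ℂ (Matrix A A ℂ)) (T : Submodule ℂ (Matrix B B ℂ)),
      InClass S → InClass T → Cohom T S → F B T ≤ F A S) :
    1 ≤ Real.logb 2 (F (Fin 2) (qGraph 2)) ∧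
    (∀ d : ℕ, 1 ≤ d → F (Fin d) (qGraph d) = (d : ℝ) ^ Real.logb 2 (F (Fin 2) (qGraph 2))) ∧
    ∀ (r : ℕ) (m : Fin r → ℕ) (G : ∀ d, SimpleGraph (Fin (m d))),
      F _ (bigSum G) =
        ∑ d : Fin r, F (Fin (m d)) (graphNC (G d)) *
          ((d.1 + 1 : ℕ) : ℝ) ^ Real.logb 2 (F (Fin 2) (qGraph 2)) := by
  have hF : IsSpectralPoint F :=
    ⟨hiso _ _ _ _, hadd _ _ _ _, hmul _ _ _ _, hnorm, hmono _ _ _ _⟩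
  refine ⟨hF.one_le_logb_map_qGraph_two, fun d hd => hF.map_qGraph (Nat.one_le_iff_ne_zero.1 hd),
    fun r m G => ?_⟩
  rw [hF.map_bigSum]
  exact Finset.sum_congr rfl fun d _ => by rw [hF.map_qGraph d.1.succ_ne_zero]

end NCG
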